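/- arXiv:1708.06554 — 4 statements merged into one kernel-verified Lean document; each statement's English description precedes it below -/
import Mathlib

section
/- Let 0 < q < 1 be real and let x be a real number. For every integer n ≥ 0, the Carlitz type q-Changhee polynomial value satisfies Ch_{n,q}(x) = (1+q) · Σ_{k=0}^{n} Σ_{l=0}^{k} (1/(1−q)^k) C(k,l) q^{l x} (−1)^l S₁(n,k) / (1 + q^{l+1}), where C(k,l) is the binomial coefficient. -/
/-- The `q`-analogue `[x]_q = (1 - q^x)/(1 - q)` (real exponent, via `rpow`). -/
noncomputable def qnum (q x : ℝ) : ℝ := (1 - q ^ x) / (1 - q)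

/-- Carlitz `q`-Euler polynomial value
`ℰ_{n,q}(x) = (1+q) ∑_{m=0}^∞ (-q)^m [m+x]_q^n`. -/
noncomputable def qEuler (q : ℝ) (n : ℕ) (x : ℝ) : ℝ :=
  (1 + q) * ∑' m : ℕ, (-q) ^ m * (qnum q ((m : ℝ) + x)) ^ n

/-- Signed Stirling numbers of the first kind, defined as the coefficients of the
falling factorial: `x(x-1)⋯(x-n+1) = ∑_{k=0}^n S₁(n,k) x^k`. -/
noncomputable def S1 (n k : ℕ) : ℤ := (descPochhammer ℤ n).coeff k

/-- Stirling numbers of the second kind, so that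
`x^n = ∑_{k=0}^n S₂(n,k) x(x-1)⋯(x-k+1)`. -/
def S2 : ℕ → ℕ → ℕ
  | 0, 0 => 1
  | 0, _ + 1 => 0
  | _ + 1, 0 => 0
  | n + 1, k + 1 => S2 n k + (k + 1) * S2 n (k + 1)

/-- Carlitz type `q`-Changhee polynomial value
`Ch_{n,q}(x) = ∑_{k=0}^n S₁(n,k) ℰ_{k,q}(x)`. -/
noncomputable def qChanghee (q : ℝ) (n : ℕ) (x : ℝ) : ℝ :=
  ∑ k ∈ Finset.range (n + 1), (S1 n k : ℝ) * qEuler q k x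

theorem hasSum_qEuler_aux (q x : ℝ) (hq0 : 0 < q) (hq1 : q < 1) (k : ℕ) :
    HasSum (fun m : ℕ => (-q) ^ m * (qnum q ((m : ℝ) + x)) ^ k)
      (∑ l ∈ Finset.range (k + 1),
        (1 / (1 - q) ^ k) * (k.choose l : ℝ) * q ^ ((l : ℝ) * x) * (-1) ^ l /
          (1 + q ^ (l + 1))) := by
  have h1 : ∀ l ∈ Finset.range (k + 1), HasSum (fun m : ℕ =>
      (1 / (1 - q) ^ k) * (k.choose l : ℝ) * q ^ ((l : ℝ) * x) * (-1) ^ l *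
        (-(q ^ (l + 1))) ^ m)
      ((1 / (1 - q) ^ k) * (k.choose l : ℝ) * q ^ ((l : ℝ) * x) * (-1) ^ l /
          (1 + q ^ (l + 1))) := by
    intro l _
    have hlt : |(-(q ^ (l + 1)))| < 1 := by
      rw [abs_neg, abs_of_pos (by positivity)]
      exact pow_lt_one₀ hq0.le hq1 (by omega)
    have h := (hasSum_geometric_of_abs_lt_one hlt).mul_left
      ((1 / (1 - q) ^ k) * (k.choose l : ℝ) * q ^ ((l : ℝ) * x) * (-1) ^ l)
    rw [sub_neg_eq_add, ← div_eq_mul_inv] at h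
    exact h
  have h2 := hasSum_sum h1
  convert h2 using 1
  funext m
  have hy : ∀ l : ℕ, (q ^ ((m : ℝ) + x)) ^ l = (q ^ l) ^ m * q ^ ((l : ℝ) * x) := by
    intro l
    rw [Real.rpow_add hq0, Real.rpow_natCast, mul_pow, mul_comm (l : ℝ) x,
      Real.rpow_mul hq0.le, Real.rpow_natCast, ← pow_mul, ← pow_mul, mul_comm m l]
  rw [qnum, div_pow, sub_eq_neg_add 1 (q ^ ((m : ℝ) + x)), add_pow, Finset.sum_div,
    Finset.mul_sum]
  refine Finset.sum_congr rfl fun l _ => ?_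
  rw [neg_pow (q ^ ((m : ℝ) + x)) l, hy l, neg_pow q m, neg_pow (q ^ (l + 1)) m, pow_succ q l,
    mul_pow]
  ring

theorem carlitz_qChanghee_explicit_formula (q x : ℝ) (hq0 : 0 < q) (hq1 : q < 1) (n : ℕ) :
    qChanghee q n x = (1 + q) *
      ∑ k ∈ Finset.range (n + 1), ∑ l ∈ Finset.range (k + 1),
        (1 / (1 - q) ^ k) * (k.choose l : ℝ) * q ^ ((l : ℝ) * x) * (-1) ^ l *
          (S1 n k : ℝ) / (1 + q ^ (l + 1)) := by
  rw [qChanghee, Finset.mul_sum]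
  refine Finset.sum_congr rfl fun k _ => ?_
  rw [qEuler, (hasSum_qEuler_aux q x hq0 hq1 k).tsum_eq, mul_left_comm, Finset.mul_sum]
  congr 1
  refine Finset.sum_congr rfl fun l _ => ?_
  ring
end

section
/- Let 0 < q < 1 be real, let x be a real number, and let t be a real number with |t| < 1. Then the generating function identity (1+q) · Σ_{m=0}^{∞} (−q)^m (1+t)^{[m+x]_q} = Σ_{n=0}^{∞} Ch_{n,q}(x) · t^n/n! holds, both series being absolutely convergent; here (1+t)^a denotes the real power exp(a · log(1+t)). -/
open Filter Topology in
lemma aux_bound_summable (C t : ℝ) (hC : 0 ≤ C) (ht : |t| < 1) :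
    Summable fun n : ℕ => (∏ i ∈ Finset.range n, (C + i)) * |t| ^ n / (n.factorial : ℝ) := by
  obtain ⟨r, hr1, hr2⟩ := exists_between ht
  have hr0 : 0 < r := lt_of_le_of_lt (abs_nonneg t) hr1
  apply summable_of_ratio_norm_eventually_le hr2
  obtain ⟨N, hN⟩ := exists_nat_ge (C * |t| / (r - |t|))
  filter_upwards [eventually_ge_atTop N] with n hn
  have hnN : (N : ℝ) ≤ n := by exact_mod_cast hn
  have h1 : C * |t| ≤ n * (r - |t|) := by
    have := (div_le_iff₀ (sub_pos.2 hr1)).1 (hN.trans hnN)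
    exact this
  have hp : 0 ≤ ∏ i ∈ Finset.range n, (C + (i : ℝ)) :=
    Finset.prod_nonneg fun i _ => by positivity
  have hp' : 0 ≤ ∏ i ∈ Finset.range (n + 1), (C + (i : ℝ)) :=
    Finset.prod_nonneg fun i _ => by positivity
  rw [Real.norm_of_nonneg (by positivity), Real.norm_of_nonneg (by positivity),
    Finset.prod_range_succ, Nat.factorial_succ, pow_succ]
  have h2 : (C + n) * |t| / ((n : ℝ) + 1) ≤ r := by
    rw [div_le_iff₀ (by positivity)]
    nlinarith
  calc _ = ((C + n) * |t| / ((n : ℝ) + 1)) *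
        ((∏ i ∈ Finset.range n, (C + (i : ℝ))) * |t| ^ n / (n.factorial : ℝ)) := by
        push_cast
        field_simp
    _ ≤ _ := mul_le_mul_of_nonneg_right h2 (by positivity)

lemma aux_prod_bound (C a : ℝ) (ha : |a| ≤ C) (n : ℕ) :
    |∏ i ∈ Finset.range n, (a - i)| ≤ ∏ i ∈ Finset.range n, (C + (i : ℝ)) := by
  rw [Finset.abs_prod]
  refine Finset.prod_le_prod (fun i _ => abs_nonneg _) fun i _ => ?_
  refine (abs_sub _ _).trans ?_
  simpa using ha

lemma aux_S1 (n : ℕ) (a : ℝ) :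
    ∑ k ∈ Finset.range (n + 1), (S1 n k : ℝ) * a ^ k = ∏ i ∈ Finset.range n, (a - i) := by
  rw [← descPochhammer_eval_eq_prod_range, ← descPochhammer_map (Int.castRingHom ℝ),
    Polynomial.eval_map, Polynomial.eval₂_eq_sum_range' _ (n := n + 1)]
  · simp [S1]
  · rw [descPochhammer_natDegree]; omega

lemma aux_binom (a t : ℝ) (ht : |t| < 1) :
    HasSum (fun n : ℕ => (∏ i ∈ Finset.range n, (a - i)) * t ^ n / (n.factorial : ℝ))
      ((1 + t) ^ a) := by
  have h := (Real.one_add_rpow_hasFPowerSeriesOnBall_zero (a := a)).hasSum (y := t) (by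
    simpa [enorm_eq_nnnorm, ← NNReal.coe_lt_coe] using ht)
  simp only [zero_add] at h
  refine (congrArg (fun f : ℕ → ℝ => HasSum f ((1 + t) ^ a)) (funext fun n => ?_)).mpr h
  rw [binomialSeries_apply]
  have h2 := Ring.descPochhammer_eq_factorial_smul_choose a n
  rw [← Polynomial.eval₂_smulOneHom_eq_smeval] at h2
  have h3 : ∏ i ∈ Finset.range n, (a - i) = (n.factorial : ℝ) * Ring.choose a n := by
    rw [← descPochhammer_eval_eq_prod_range, ← descPochhammer_map (Int.castRingHom ℝ),
      Polynomial.eval_map, ← nsmul_eq_mul, ← h2]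
    congr 1
    exact Subsingleton.elim _ _
  rw [h3]
  have : (n.factorial : ℝ) ≠ 0 := by positivity
  simp
  field_simp

lemma aux_qnum_bound (q x : ℝ) (hq0 : 0 < q) (hq1 : q < 1) (m : ℕ) :
    |qnum q ((m : ℝ) + x)| ≤ (1 + q ^ x) / (1 - q) := by
  have h : 0 < 1 - q := by linarith
  unfold qnum
  rw [abs_div, abs_of_pos h]
  gcongr
  have h1 : q ^ ((m : ℝ) + x) ≤ q ^ x :=
    Real.rpow_le_rpow_of_exponent_ge hq0 hq1.le (by simp)
  have h2 := Real.rpow_pos_of_pos hq0 ((m : ℝ) + x)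
  rw [abs_le]
  constructor <;> linarith

lemma aux_changhee (q x : ℝ) (hq0 : 0 < q) (hq1 : q < 1) (n : ℕ) :
    qChanghee q n x = (1 + q) * ∑' m : ℕ, (-q) ^ m *
      ∏ i ∈ Finset.range n, (qnum q ((m : ℝ) + x) - i) := by
  have hs : ∀ k : ℕ, Summable fun m : ℕ => (-q) ^ m * (qnum q ((m : ℝ) + x)) ^ k := by
    intro k
    refine Summable.of_norm_bounded (g := fun m : ℕ => q ^ m * ((1 + q ^ x) / (1 - q)) ^ k)
      ((summable_geometric_of_lt_one hq0.le hq1).mul_right _) fun m => ?_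
    rw [norm_mul, norm_pow, norm_pow, norm_neg, Real.norm_of_nonneg hq0.le, Real.norm_eq_abs]
    gcongr
    exact aux_qnum_bound q x hq0 hq1 m
  unfold qChanghee qEuler
  simp_rw [← aux_S1, Finset.mul_sum]
  rw [Summable.tsum_finsetSum, Finset.mul_sum]
  · refine Finset.sum_congr rfl fun k _ => ?_
    rw [mul_left_comm, ← tsum_mul_left]
    congr 2
    funext m
    ring
  · intro k _
    refine ((hs k).mul_left (S1 n k : ℝ)).congr fun m => ?_
    ring

theorem qChanghee_generating_function (q x t : ℝ) (hq0 : 0 < q) (hq1 : q < 1)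
    (ht : |t| < 1) :
    (Summable fun m : ℕ => |(-q) ^ m * (1 + t) ^ (qnum q ((m : ℝ) + x))|) ∧
    (Summable fun n : ℕ => |qChanghee q n x * t ^ n / (n.factorial : ℝ)|) ∧
    (1 + q) * ∑' m : ℕ, (-q) ^ m * (1 + t) ^ (qnum q ((m : ℝ) + x)) =
      ∑' n : ℕ, qChanghee q n x * t ^ n / (n.factorial : ℝ) := by
  set C : ℝ := (1 + q ^ x) / (1 - q) with hCdef
  have hC : 0 ≤ C := (abs_nonneg _).trans (aux_qnum_bound q x hq0 hq1 0)
  let F : ℕ → ℕ → ℝ := fun m n => (-q) ^ m *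
    ((∏ i ∈ Finset.range n, (qnum q ((m : ℝ) + x) - i)) * t ^ n / (n.factorial : ℝ))
  have hF : Summable (Function.uncurry F) := by
    refine Summable.of_norm_bounded
      ((summable_geometric_of_lt_one hq0.le hq1).mul_of_nonneg
        (aux_bound_summable C t hC ht) (fun m => by positivity) fun n => ?_) ?_
    · have : 0 ≤ ∏ i ∈ Finset.range n, (C + (i : ℝ)) :=
        Finset.prod_nonneg fun i _ => by positivity
      simp only [Pi.zero_apply]
      positivity
    · rintro ⟨m, n⟩
      simp only [Function.uncurry, F, Real.norm_eq_abs, abs_mul, abs_div, abs_pow, abs_neg,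
        Nat.abs_cast, abs_of_pos hq0]
      gcongr
      exact aux_prod_bound C _ (aux_qnum_bound q x hq0 hq1 m) n
  have hrow : ∀ m : ℕ, ∑' n, F m n = (-q) ^ m * (1 + t) ^ (qnum q ((m : ℝ) + x)) := fun m =>
    ((aux_binom (qnum q ((m : ℝ) + x)) t ht).mul_left ((-q) ^ m)).tsum_eq
  have hcol : ∀ n : ℕ, (1 + q) * ∑' m, F m n = qChanghee q n x * t ^ n / (n.factorial : ℝ) := by
    intro n
    rw [aux_changhee q x hq0 hq1, mul_assoc, mul_div_assoc, mul_div_assoc,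
      ← tsum_mul_right]
    congr 2
    funext m
    simp only [F]
    ring
  refine ⟨?_, ?_, ?_⟩
  · have := hF.prod.abs
    refine this.congr fun m => ?_
    rw [← hrow]
    rfl
  · have := (hF.prod_symm.prod.mul_left (1 + q)).abs
    refine this.congr fun n => ?_
    rw [← hcol]
    rfl
  · simp_rw [← hrow, ← hcol]
    rw [tsum_mul_left, hF.tsum_comm]
end

section
/- Let 0 < q < 1 be real and let x be a real number. For every integer n ≥ 0, the Carlitz type q-Changhee polynomial values satisfy the recurrence q · Ch_{n,q}(x+1) + Ch_{n,q}(x) = (1+q) · Σ_{l=0}^{n} S₁(n,l) [x]_q^l. -/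
theorem qEuler_summable (q x : ℝ) (hq0 : 0 < q) (hq1 : q < 1) (n : ℕ) :
    Summable (fun m : ℕ => (-q) ^ m * (qnum q ((m : ℝ) + x)) ^ n) := by
  have h1 : 0 < 1 - q := by linarith
  have hg : Summable (fun m : ℕ => q ^ m * ((1 + q ^ x) / (1 - q)) ^ n) :=
    (summable_geometric_of_lt_one hq0.le hq1).mul_right _
  refine Summable.of_norm_bounded hg ?_
  intro m
  rw [norm_mul, norm_pow, norm_pow, norm_neg, Real.norm_of_nonneg hq0.le]
  have hx : 0 < q ^ x := Real.rpow_pos_of_pos hq0 x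
  have hm0 : 0 < q ^ m := pow_pos hq0 m
  have hm1 : q ^ m ≤ 1 := pow_le_one₀ hq0.le hq1.le
  have hb : ‖qnum q ((m : ℝ) + x)‖ ≤ (1 + q ^ x) / (1 - q) := by
    unfold qnum
    rw [Real.rpow_add hq0, Real.rpow_natCast, norm_div, Real.norm_of_nonneg h1.le]
    gcongr
    rw [Real.norm_eq_abs, abs_le]
    constructor <;> nlinarith
  gcongr

theorem qEuler_rec (q x : ℝ) (hq0 : 0 < q) (hq1 : q < 1) (n : ℕ) :
    q * qEuler q n (x + 1) + qEuler q n x = (1 + q) * (qnum q x) ^ n := by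
  have h := (qEuler_summable q x hq0 hq1 n).tsum_eq_zero_add
  have h2 : ∑' m : ℕ, (-q) ^ (m + 1) * (qnum q (((m + 1 : ℕ) : ℝ) + x)) ^ n
      = (-q) * ∑' m : ℕ, (-q) ^ m * (qnum q ((m : ℝ) + (x + 1))) ^ n := by
    rw [← tsum_mul_left]
    congr 1
    ext m
    have : (((m + 1 : ℕ) : ℝ) + x) = (m : ℝ) + (x + 1) := by push_cast; ring
    rw [this]; ring
  rw [h2] at h
  unfold qEuler
  rw [h]
  simp only [pow_zero, Nat.cast_zero, zero_add, one_mul]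
  ring

theorem qChanghee_recurrence (q x : ℝ) (hq0 : 0 < q) (hq1 : q < 1) (n : ℕ) :
    q * qChanghee q n (x + 1) + qChanghee q n x =
      (1 + q) * ∑ l ∈ Finset.range (n + 1), (S1 n l : ℝ) * (qnum q x) ^ l := by
  unfold qChanghee
  rw [Finset.mul_sum, Finset.mul_sum, ← Finset.sum_add_distrib]
  refine Finset.sum_congr rfl fun k _ => ?_
  linear_combination (S1 n k : ℝ) * qEuler_rec q x hq0 hq1 k
end

section
/- Let 0 < q < 1 be real and let x be a real number. For every integer n ≥ 0, the Carlitz type q-Changhee polynomial value satisfies Ch_{n,q}(x) = Σ_{k=0}^{n} Σ_{l=0}^{k} C(k,l) S₁(n,k) [x]_q^{k−l} q^{l x} ℰ_{l,q}(0), where C(k,l) is the binomial coefficient and ℰ_{l,q}(0) are the Carlitz q-Euler numbers. -/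
lemma qnum_add_aux (q x : ℝ) (hq0 : 0 < q) (hq1 : q < 1) (m : ℝ) :
    qnum q (m + x) = q ^ x * qnum q (m + 0) + qnum q x := by
  have h : (1 - q) ≠ 0 := by linarith
  unfold qnum
  rw [Real.rpow_add hq0, add_zero]
  field_simp
  ring

lemma summable_aux (q : ℝ) (hq0 : 0 < q) (hq1 : q < 1) (l : ℕ) :
    Summable (fun m : ℕ => (-q) ^ m * (qnum q ((m : ℝ) + 0)) ^ l) := by
  have hg : Summable (fun m : ℕ => q ^ m * (1 / (1 - q)) ^ l) :=
    (summable_geometric_of_lt_one hq0.le hq1).mul_right _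
  refine Summable.of_norm_bounded hg (fun m => ?_)
  have h1 : 0 < 1 - q := by linarith
  have h2 : q ^ ((m : ℝ) + 0) ≤ 1 := Real.rpow_le_one hq0.le hq1.le (by positivity)
  have h3 : 0 < q ^ ((m : ℝ) + 0) := Real.rpow_pos_of_pos hq0 _
  have h4 : 0 ≤ qnum q ((m : ℝ) + 0) := div_nonneg (by linarith) h1.le
  have h5 : qnum q ((m : ℝ) + 0) ≤ 1 / (1 - q) := by
    unfold qnum
    exact div_le_div_of_nonneg_right (by linarith) h1.le
  rw [norm_mul, norm_pow, norm_pow, norm_neg, Real.norm_of_nonneg hq0.le, Real.norm_of_nonneg h4]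
  gcongr

lemma qEuler_add_aux (q x : ℝ) (hq0 : 0 < q) (hq1 : q < 1) (k : ℕ) :
    qEuler q k x = ∑ l ∈ Finset.range (k + 1),
      (k.choose l : ℝ) * (qnum q x) ^ (k - l) * q ^ ((l : ℝ) * x) * qEuler q l 0 := by
  have key : ∀ m : ℕ, (-q) ^ m * (qnum q ((m : ℝ) + x)) ^ k =
      ∑ l ∈ Finset.range (k + 1), ((k.choose l : ℝ) * (qnum q x) ^ (k - l) * q ^ ((l : ℝ) * x)) *
        ((-q) ^ m * (qnum q ((m : ℝ) + 0)) ^ l) := by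
    intro m
    rw [qnum_add_aux q x hq0 hq1, add_pow, Finset.mul_sum]
    refine Finset.sum_congr rfl (fun l _ => ?_)
    rw [mul_comm (l : ℝ) x, Real.rpow_mul hq0.le, Real.rpow_natCast, mul_pow]
    ring
  unfold qEuler
  rw [tsum_congr key, Summable.tsum_finsetSum
    (fun l _ => (summable_aux q hq0 hq1 l).mul_left _), Finset.mul_sum]
  refine Finset.sum_congr rfl (fun l _ => ?_)
  rw [tsum_mul_left]
  ring

theorem qChanghee_in_terms_of_qEuler_numbers (q x : ℝ) (hq0 : 0 < q) (hq1 : q < 1) (n : ℕ) :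
    qChanghee q n x = ∑ k ∈ Finset.range (n + 1), ∑ l ∈ Finset.range (k + 1),
      (k.choose l : ℝ) * (S1 n k : ℝ) * (qnum q x) ^ (k - l) * q ^ ((l : ℝ) * x) *
        qEuler q l 0 := by
  unfold qChanghee
  refine Finset.sum_congr rfl (fun k _ => ?_)
  rw [qEuler_add_aux q x hq0 hq1, Finset.mul_sum]
  refine Finset.sum_congr rfl (fun l _ => ?_)
  ring
end
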